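/- Let a, b : Fin k → C ⊕ N be two facts and let canonical(a), canonical(b) : Fin k → C ⊕ (Fin k) be their canonicalizations. Then a and b are isomorphic if and only if canonical(a) = canonical(b). -/

import Mathlib

open Classical

/-- An isomorphism from a fact `a` over nulls `N` to a fact `b` over nulls `N'`:
a function on terms fixing constants, mapping nulls to nulls, injective on the
terms occurring in `a`, with `θ (a i) = b i` at every position. -/
def IsFactIso {C N N' : Type*} {k : ℕ} (a : Fin k → C ⊕ N) (b : Fin k → C ⊕ N')
    (θ : C ⊕ N → C ⊕ N') : Prop :=
  (∀ c : C, θ (Sum.inl c) = Sum.inl c) ∧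
  (∀ ν : N, ∃ ν' : N', θ (Sum.inr ν) = Sum.inr ν') ∧
  Set.InjOn θ {t | ∃ i : Fin k, a i = t} ∧
  (∀ i : Fin k, θ (a i) = b i)

/-- The least index `j : Fin k` with `a j = a i`. -/
noncomputable def leastIdx {C N : Type*} {k : ℕ} (a : Fin k → C ⊕ N) (i : Fin k) : Fin k :=
  (Finset.univ.filter (fun j => a j = a i)).min' ⟨i, by simp⟩

/-- The canonicalization of a fact: constants are kept, and each null `a i` is
replaced by the canonical null `Sum.inr j`, where `j` is the least index with
`a j = a i`. -/
noncomputable def canonical {C N : Type*} {k : ℕ} (a : Fin k → C ⊕ N) :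
    Fin k → C ⊕ (Fin k) :=
  fun i => match a i with
  | Sum.inl c => Sum.inl c
  | Sum.inr _ => Sum.inr (leastIdx a i)

/-!
Two facts are isomorphic exactly when they agree on which positions carry equal terms and on which
constants sit where, and the canonicalization of a fact records exactly this information: the least
index names the class of positions carrying a given null. When `a` and `b` agree in this sense,
`a i ↦ b i` is a well-defined injection on the terms of `a`; the identity on constants and any map
between nulls extend it to an isomorphism.
-/

section

variable {C N N' N'' : Type*} {k : ℕ}

/-- Two facts, possibly over different nulls, have the same *pattern* if they have the same
coincidences between positions and the same constants at the same positions. This is the common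
invariant behind isomorphism and canonicalization. -/
structure SamePattern (a : Fin k → C ⊕ N) (b : Fin k → C ⊕ N') : Prop where
  eq_iff : ∀ i j, a i = a j ↔ b i = b j
  eq_inl_iff : ∀ i c, a i = .inl c ↔ b i = .inl c

namespace SamePattern

variable {a : Fin k → C ⊕ N} {b : Fin k → C ⊕ N'} {d : Fin k → C ⊕ N''}

theorem symm (h : SamePattern a b) : SamePattern b a :=
  ⟨fun i j => (h.eq_iff i j).symm, fun i c => (h.eq_inl_iff i c).symm⟩

theorem trans (hab : SamePattern a b) (hbd : SamePattern b d) : SamePattern a d :=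
  ⟨fun i j => (hab.eq_iff i j).trans (hbd.eq_iff i j),
    fun i c => (hab.eq_inl_iff i c).trans (hbd.eq_inl_iff i c)⟩

theorem exists_eq_inr (h : SamePattern a b) {i : Fin k} {ν : N} (hi : a i = .inr ν) :
    ∃ ν', b i = .inr ν' := by
  rcases hb : b i with c | ν'
  · rw [← h.eq_inl_iff, hi] at hb
    cases hb
  · exact ⟨ν', rfl⟩

end SamePattern

variable {a : Fin k → C ⊕ N} {b : Fin k → C ⊕ N'}

theorem apply_leastIdx (a : Fin k → C ⊕ N) (i : Fin k) : a (leastIdx a i) = a i :=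
  (Finset.mem_filter.1 (Finset.min'_mem (Finset.univ.filter fun j => a j = a i) _)).2

theorem leastIdx_congr {i j : Fin k} (h : ∀ l, a l = a i ↔ b l = b j) :
    leastIdx a i = leastIdx b j := by
  simp only [leastIdx, h]

theorem leastIdx_eq_leastIdx_iff {i j : Fin k} : leastIdx a i = leastIdx a j ↔ a i = a j := by
  refine ⟨fun h => ?_, fun h => leastIdx_congr fun l => by rw [h]⟩
  rw [← apply_leastIdx a i, h, apply_leastIdx a j]

theorem canonical_apply_of_eq_inl {i : Fin k} {c : C} (h : a i = .inl c) :
    canonical a i = .inl c := by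
  simp only [canonical, h]

theorem canonical_apply_of_eq_inr {i : Fin k} {ν : N} (h : a i = .inr ν) :
    canonical a i = .inr (leastIdx a i) := by
  simp only [canonical, h]

theorem samePattern_canonical (a : Fin k → C ⊕ N) : SamePattern a (canonical a) where
  eq_iff i j := by
    rcases hi : a i with c | ν <;> rcases hj : a j with c' | ν' <;>
      simp [canonical_apply_of_eq_inl, canonical_apply_of_eq_inr, leastIdx_eq_leastIdx_iff, hi, hj]
  eq_inl_iff i c := by
    rcases hi : a i with c' | ν <;>
      simp [canonical_apply_of_eq_inl, canonical_apply_of_eq_inr, hi]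

theorem SamePattern.canonical_eq (h : SamePattern a b) : canonical a = canonical b := by
  funext i
  rcases hi : a i with c | ν
  · rw [canonical_apply_of_eq_inl hi, canonical_apply_of_eq_inl ((h.eq_inl_iff i c).1 hi)]
  · obtain ⟨ν', hi'⟩ := h.exists_eq_inr hi
    rw [canonical_apply_of_eq_inr hi, canonical_apply_of_eq_inr hi',
      leastIdx_congr fun l => h.eq_iff l i]

theorem canonical_eq_canonical_iff : canonical a = canonical b ↔ SamePattern a b := by
  refine ⟨fun h => (samePattern_canonical a).trans ?_, SamePattern.canonical_eq⟩
  rw [h]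
  exact (samePattern_canonical b).symm

theorem IsFactIso.apply_eq_inl_iff {θ : C ⊕ N → C ⊕ N'} (h : IsFactIso a b θ) (t : C ⊕ N) (c : C) :
    θ t = .inl c ↔ t = .inl c := by
  obtain ⟨hconst, hnull, -, -⟩ := h
  rcases t with c' | ν
  · simp [hconst]
  · obtain ⟨ν', hν'⟩ := hnull ν
    simp [hν']

theorem IsFactIso.samePattern {θ : C ⊕ N → C ⊕ N'} (h : IsFactIso a b θ) : SamePattern a b := by
  have ⟨_, _, hinj, hab⟩ := h
  refine ⟨fun i j => ?_, fun i c => ?_⟩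
  · rw [← hab i, ← hab j, hinj.eq_iff ⟨i, rfl⟩ ⟨j, rfl⟩]
  · rw [← hab i, h.apply_eq_inl_iff]

theorem SamePattern.isFactIso_extend (h : SamePattern a b) (g : N → N') :
    IsFactIso a b (Function.extend a b (Sum.map id g)) := by
  have extend_apply (i : Fin k) : Function.extend a b (Sum.map id g) (a i) = b i :=
    Function.FactorsThrough.extend_apply (fun i j => (h.eq_iff i j).1) _ i
  refine ⟨fun c => ?_, fun ν => ?_, ?_, extend_apply⟩
  · by_cases hc : ∃ i, a i = .inl c
    · obtain ⟨i, hi⟩ := hc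
      rw [← hi, extend_apply]
      exact (h.eq_inl_iff i c).1 hi
    · rw [Function.extend_apply' _ _ _ hc, Sum.map_inl, id]
  · by_cases hν : ∃ i, a i = .inr ν
    · obtain ⟨i, hi⟩ := hν
      rw [← hi, extend_apply]
      exact h.exists_eq_inr hi
    · exact ⟨g ν, Function.extend_apply' _ _ _ hν⟩
  · rintro _ ⟨i, rfl⟩ _ ⟨j, rfl⟩ hij
    rwa [extend_apply, extend_apply, ← h.eq_iff] at hij

/-- The map `N → N'` appears because an isomorphism acts on all nulls, not only on those occurring
in `a`. -/
theorem fact_iso_iff_canonical_eq_general (a : Fin k → C ⊕ N) (b : Fin k → C ⊕ N') :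
    (∃ θ : C ⊕ N → C ⊕ N', IsFactIso a b θ) ↔
      Nonempty (N → N') ∧ canonical a = canonical b := by
  rw [canonical_eq_canonical_iff]
  constructor
  · rintro ⟨θ, h⟩
    choose g _ using h.2.1
    exact ⟨⟨g⟩, h.samePattern⟩
  · rintro ⟨⟨g⟩, h⟩
    exact ⟨_, h.isFactIso_extend g⟩

end

/-- Two facts are isomorphic iff their canonicalizations are equal. -/
theorem fact_iso_iff_canonical_eq {C N : Type*} {k : ℕ} (a b : Fin k → C ⊕ N) :
    (∃ θ : C ⊕ N → C ⊕ N, IsFactIso a b θ) ↔ canonical a = canonical b :=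
  (fact_iso_iff_canonical_eq_general a b).trans (and_iff_right ⟨id⟩)
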